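/- Let n ≥ 1 and let σ : ℂⁿ → ℂⁿ be a real-linear map whose determinant, as an ℝ-linear endomorphism of ℂⁿ (a real vector space of dimension 2n), is positive. Suppose there exist vectors v₁, …, v_{n−1} ∈ ℂⁿ that are linearly independent over ℂ, and for each j = 1, …, n−1 there exist a nonzero vector w_j ∈ ℂⁿ and complex numbers α_j, β_j with σ(v_j) = α_j·w_j, σ(i·v_j) = β_j·w_j, and Im(conj(α_j)·β_j) > 0 (i.e. σ maps the complex line ℂ·v_j onto the complex line ℂ·w_j preserving the natural orientations of complex lines). Then for every t ∈ [0,1], the real-linear map H_σ^t := ∂σ + t·∂̄σ has positive determinant as an ℝ-linear endomorphism of ℂⁿ; in particular each H_σ^t is a real-linear isomorphism. -/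

import Mathlib

/-!
Since `σ` is injective, counting real dimensions shows that the `wⱼ` are complex-linearly
independent, so some complex-linear automorphism sends each `wⱼ` to `vⱼ`. Composing `σ` with it
commutes with the deformation and multiplies all determinants by the same positive constant, so one
may assume that `σ` preserves the lines `ℂ·vⱼ`. Completing `v` to a basis, `σ` becomes block
triangular with blocks `ℂ → ℂ`, all but one of which have positive determinant by assumption; the
last one then does too, since `det σ > 0`. A block has the form `z ↦ a z + b z̄` and the deformation
turns it into `z ↦ a z + t b z̄`, so its determinant `|a|² - |b|²` can only grow to
`|a|² - t² |b|²`. Hence even `det σ ≤ det H_σ^t`.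
-/

open Module

section CanonicalDeformation

variable {V W V' W' : Type*}
  [AddCommGroup V] [Module ℝ V] [Module ℂ V] [IsScalarTower ℝ ℂ V]
  [AddCommGroup W] [Module ℝ W] [Module ℂ W] [IsScalarTower ℝ ℂ W]
  [AddCommGroup V'] [Module ℝ V'] [Module ℂ V'] [IsScalarTower ℝ ℂ V']
  [AddCommGroup W'] [Module ℝ W'] [Module ℂ W'] [IsScalarTower ℝ ℂ W']

/-- The complex-linear part `∂σ` of a real-linear map `σ`, as a real-linear map. -/
noncomputable def complexLinearPart (σ : V →ₗ[ℝ] W) : V →ₗ[ℝ] W :=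
  (1 / 2 : ℂ) • (σ - Complex.I • σ ∘ₗ (Complex.I • LinearMap.id))

/-- The complex-antilinear part `∂̄σ` of a real-linear map `σ`, as a real-linear map. -/
noncomputable def complexAntilinearPart (σ : V →ₗ[ℝ] W) : V →ₗ[ℝ] W :=
  (1 / 2 : ℂ) • (σ + Complex.I • σ ∘ₗ (Complex.I • LinearMap.id))

/-- The canonical deformation `H_σ^t = ∂σ + t·∂̄σ` of a real-linear map `σ`. -/
noncomputable def canonicalDeformation (σ : V →ₗ[ℝ] W) (t : ℝ) : V →ₗ[ℝ] W :=
  complexLinearPart σ + t • complexAntilinearPart σ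

theorem complexLinearPart_apply (σ : V →ₗ[ℝ] W) (u : V) :
    complexLinearPart σ u = (1 / 2 : ℂ) • (σ u - Complex.I • σ (Complex.I • u)) :=
  rfl

theorem complexAntilinearPart_apply (σ : V →ₗ[ℝ] W) (u : V) :
    complexAntilinearPart σ u = (1 / 2 : ℂ) • (σ u + Complex.I • σ (Complex.I • u)) :=
  rfl

theorem canonicalDeformation_apply (σ : V →ₗ[ℝ] W) (t : ℝ) (u : V) :
    canonicalDeformation σ t u = (1 / 2 : ℂ) • (σ u - Complex.I • σ (Complex.I • u))
      + t • ((1 / 2 : ℂ) • (σ u + Complex.I • σ (Complex.I • u))) :=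
  rfl

@[simp]
theorem canonicalDeformation_zero (t : ℝ) : canonicalDeformation (0 : V →ₗ[ℝ] W) t = 0 := by
  ext u
  simp [canonicalDeformation_apply]

theorem canonicalDeformation_comp_restrictScalars (P : W →ₗ[ℂ] W') (σ : V →ₗ[ℝ] W)
    (Q : V' →ₗ[ℂ] V) (t : ℝ) :
    canonicalDeformation (P.restrictScalars ℝ ∘ₗ σ ∘ₗ Q.restrictScalars ℝ) t =
      P.restrictScalars ℝ ∘ₗ canonicalDeformation σ t ∘ₗ Q.restrictScalars ℝ := by
  ext u
  simp [canonicalDeformation_apply, P.map_smul_of_tower]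

theorem complexLinearPart_I_smul (σ : V →ₗ[ℝ] W) (u : V) :
    complexLinearPart σ (Complex.I • u) = Complex.I • complexLinearPart σ u := by
  rw [complexLinearPart_apply, complexLinearPart_apply, smul_comm Complex.I (1 / 2 : ℂ),
    smul_sub Complex.I, smul_smul Complex.I, smul_smul Complex.I, Complex.I_mul_I, neg_one_smul,
    map_neg]
  module

theorem complexAntilinearPart_I_smul (σ : V →ₗ[ℝ] W) (u : V) :
    complexAntilinearPart σ (Complex.I • u) = -(Complex.I • complexAntilinearPart σ u) := by
  rw [complexAntilinearPart_apply, complexAntilinearPart_apply, smul_comm Complex.I (1 / 2 : ℂ),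
    smul_add Complex.I, smul_smul Complex.I, smul_smul Complex.I, Complex.I_mul_I, neg_one_smul,
    map_neg]
  module

theorem canonicalDeformation_I_smul (σ : V →ₗ[ℝ] W) (t : ℝ) (u : V) :
    canonicalDeformation σ t (Complex.I • u) =
      Complex.I • (complexLinearPart σ u - t • complexAntilinearPart σ u) := by
  rw [canonicalDeformation, LinearMap.add_apply, LinearMap.smul_apply, complexLinearPart_I_smul,
    complexAntilinearPart_I_smul, smul_neg, smul_comm t, smul_sub, sub_eq_add_neg]

theorem complexLinearPart_canonicalDeformation (σ : V →ₗ[ℝ] W) (t : ℝ) :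
    complexLinearPart (canonicalDeformation σ t) = complexLinearPart σ := by
  ext u
  rw [complexLinearPart_apply, canonicalDeformation_I_smul, smul_smul, Complex.I_mul_I,
    canonicalDeformation, LinearMap.add_apply, LinearMap.smul_apply]
  module

theorem complexAntilinearPart_canonicalDeformation (σ : V →ₗ[ℝ] W) (t : ℝ) :
    complexAntilinearPart (canonicalDeformation σ t) = t • complexAntilinearPart σ := by
  ext u
  rw [complexAntilinearPart_apply, canonicalDeformation_I_smul, smul_smul, Complex.I_mul_I,
    canonicalDeformation, LinearMap.add_apply, LinearMap.smul_apply]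
  module

end CanonicalDeformation

section ComplexLine

variable (f : ℂ →ₗ[ℝ] ℂ)

theorem det_complex_eq_im_conj_mul :
    LinearMap.det f = (starRingEnd ℂ (f 1) * f Complex.I).im := by
  rw [← LinearMap.det_toMatrix Complex.basisOneI, Matrix.det_fin_two]
  simp only [LinearMap.toMatrix_apply, Complex.coe_basisOneI, Complex.coe_basisOneI_repr,
    Matrix.cons_val_zero, Matrix.cons_val_one, Complex.mul_im, Complex.conj_re, Complex.conj_im]
  ring

theorem det_complex_eq_normSq_sub_normSq :
    LinearMap.det f =
      Complex.normSq (complexLinearPart f 1) - Complex.normSq (complexAntilinearPart f 1) := by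
  have normSq_half : Complex.normSq (1 / 2) = 1 / 4 := by norm_num
  simp only [det_complex_eq_im_conj_mul, complexLinearPart_apply, complexAntilinearPart_apply,
    smul_eq_mul, mul_one, map_mul, normSq_half, Complex.normSq_apply, Complex.sub_re,
    Complex.sub_im, Complex.add_re, Complex.add_im, Complex.mul_re, Complex.mul_im, Complex.conj_re,
    Complex.conj_im, Complex.I_re, Complex.I_im]
  ring

theorem det_complex_le_det_canonicalDeformation {t : ℝ} (ht : t ∈ Set.Icc (-1) 1) :
    LinearMap.det f ≤ LinearMap.det (canonicalDeformation f t) := by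
  have ht_sq : t * t ≤ 1 := by nlinarith [ht.1, ht.2]
  rw [det_complex_eq_normSq_sub_normSq, det_complex_eq_normSq_sub_normSq,
    complexLinearPart_canonicalDeformation, complexAntilinearPart_canonicalDeformation,
    LinearMap.smul_apply, Complex.real_smul, Complex.normSq_mul, Complex.normSq_ofReal]
  gcongr
  exact mul_le_of_le_one_left (Complex.normSq_nonneg _) ht_sq

end ComplexLine

section ScalarBlock

variable {R S M ι : Type*} [CommRing R] [CommRing S] [Algebra R S]
  [AddCommGroup M] [Module R M] [Module S M] [IsScalarTower R S M]

/-- The `(i, j)` block of an `R`-linear endomorphism in a basis over an `R`-algebra `S`. Since the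
endomorphism need not be `S`-linear, its matrix entries are endomorphisms of `S`. -/
noncomputable def scalarBlock (b : Basis ι S M) (τ : M →ₗ[R] M) (i j : ι) : S →ₗ[R] S :=
  (b.coord i).restrictScalars R ∘ₗ τ ∘ₗ (LinearMap.toSpanSingleton S M (b j)).restrictScalars R

theorem scalarBlock_apply (b : Basis ι S M) (τ : M →ₗ[R] M) (i j : ι) (s : S) :
    scalarBlock b τ i j s = b.repr (τ (s • b j)) i :=
  rfl

theorem det_eq_prod_det_scalarBlock [Module.Free R S] [Module.Finite R S] [Fintype ι]
    [LinearOrder ι] (b : Basis ι S M) (τ : M →ₗ[R] M)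
    (hτ : ∀ i j, j < i → scalarBlock b τ i j = 0) :
    LinearMap.det τ = ∏ k, LinearMap.det (scalarBlock b τ k k) := by
  classical
  let e := Free.chooseBasis R S
  let B := e.smulTower' b
  have entry_eq (p q) : LinearMap.toMatrix B B τ p q =
      LinearMap.toMatrix e e (scalarBlock b τ p.1 q.1) p.2 q.2 := by
    simp [B, LinearMap.toMatrix_apply, scalarBlock_apply, Basis.smulTower'_repr,
      Basis.smulTower'_apply]
  have triangular : (LinearMap.toMatrix B B τ).BlockTriangular Prod.fst := fun p q hqp => by
    rw [entry_eq, hτ _ _ hqp, map_zero, Matrix.zero_apply]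
  rw [← LinearMap.det_toMatrix B, triangular.det_fintype]
  refine Finset.prod_congr rfl fun k _ => ?_
  let fiber : Free.ChooseBasisIndex R S ≃ {p : ι × Free.ChooseBasisIndex R S // p.1 = k} :=
    { toFun := fun x => ⟨(k, x), rfl⟩
      invFun := fun p => p.1.2
      left_inv := fun _ => rfl
      right_inv := by rintro ⟨⟨_, _⟩, rfl⟩; rfl }
  rw [← Matrix.det_submatrix_equiv_self fiber, ← LinearMap.det_toMatrix e]
  congr 1
  ext x y
  exact entry_eq (k, x) (k, y)

end ScalarBlock

section LinearIndependent

variable {L V ι : Type*} [Field L] [AddCommGroup V] [Module L V]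

theorem linearIndependent_of_injective_of_smul_mem_span {K W : Type*} [Field K] [Algebra K L]
    [FiniteDimensional K L] [Module K V] [IsScalarTower K L V] [AddCommGroup W] [Module K W]
    [Module L W] [IsScalarTower K L W] [Finite ι] {σ : V →ₗ[K] W} (hσ : Function.Injective σ)
    {v : ι → V} (hv : LinearIndependent L v) {w : ι → W}
    (hvw : ∀ j (a : L), σ (a • v j) ∈ Submodule.span L {w j}) : LinearIndependent L w := by
  cases nonempty_fintype ι
  let spanV := Submodule.span L (Set.range v)
  let spanW := Submodule.span L (Set.range w)
  have maps_span (x) (hx : x ∈ spanV.restrictScalars K) : σ x ∈ spanW.restrictScalars K := by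
    obtain ⟨a, rfl⟩ := (Submodule.mem_span_range_iff_exists_fun L).1 hx
    rw [map_sum]
    exact sum_mem fun j _ =>
      Submodule.span_mono (Set.singleton_subset_iff.2 (Set.mem_range_self j)) (hvw j (a j))
  have : FiniteDimensional L spanW := .span_of_finite L (Set.finite_range w)
  have : FiniteDimensional K spanW := Module.Finite.trans L spanW
  have finrank_le : finrank K spanV ≤ finrank K spanW :=
    LinearMap.finrank_le_finrank_of_injective (f := σ.restrict maps_span)
      fun x y hxy => Subtype.ext (hσ (congrArg Subtype.val hxy))
  rw [← finrank_mul_finrank K L, ← finrank_mul_finrank K L spanW,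
    mul_le_mul_iff_right₀ finrank_pos] at finrank_le
  rw [linearIndependent_iff_card_le_finrank_span]
  exact (finrank_span_eq_card hv).ge.trans finrank_le

theorem exists_linearEquiv_apply_eq_of_linearIndependent [Finite ι] {v w : ι → V}
    (hv : LinearIndependent L v) (hw : LinearIndependent L w) :
    ∃ P : V ≃ₗ[L] V, ∀ j, P (v j) = w j := by
  have : FiniteDimensional L (Submodule.span L (Set.range v)) :=
    .span_of_finite L (Set.finite_range v)
  obtain ⟨P, hP⟩ := Submodule.exists_linearEquiv_restrict_eq
    (hv.linearCombinationEquiv.symm ≪≫ₗ hw.linearCombinationEquiv)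
  refine ⟨P, fun j => ?_⟩
  have hj := hP (hv.linearCombinationEquiv (Finsupp.single j 1))
  simpa using hj.symm

theorem exists_basis_castSucc_eq {m : ℕ} (hV : finrank L V = m + 1) {v : Fin m → V}
    (hv : LinearIndependent L v) :
    ∃ b : Basis (Fin (m + 1)) L V, ∀ j : Fin m, b j.castSucc = v j := by
  obtain ⟨x, hx⟩ := exists_linearIndependent_snoc_of_lt_finrank hv (by omega)
  exact ⟨basisOfLinearIndependentOfCardEqFinrank hx (by simp [hV]), fun j => by simp⟩

end LinearIndependent

section InvariantLines

variable {V : Type*} [AddCommGroup V] [Module ℝ V] [Module ℂ V] [IsScalarTower ℝ ℂ V]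

theorem det_restrictScalars_pos (P : V ≃ₗ[ℂ] V) :
    0 < LinearMap.det ((P : V →ₗ[ℂ] V).restrictScalars ℝ) := by
  rw [LinearMap.det_restrictScalars, Algebra.norm_complex_apply, Complex.normSq_pos]
  exact P.isUnit_det'.ne_zero

theorem exists_apply_smul_eq_smul {W : Type*} [AddCommGroup W] [Module ℝ W] [Module ℂ W]
    [IsScalarTower ℝ ℂ W] {σ : V →ₗ[ℝ] W} {v : V} {w : W} {α β : ℂ} (hα : σ v = α • w)
    (hβ : σ (Complex.I • v) = β • w) :
    ∃ f : ℂ →ₗ[ℝ] ℂ, f 1 = α ∧ f Complex.I = β ∧ ∀ z : ℂ, σ (z • v) = f z • w := by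
  let f := Complex.basisOneI.constr ℝ ![α, β]
  have f_one : f 1 = α := by simp [f, Basis.constr_apply_fintype]
  have f_I : f Complex.I = β := by simp [f, Basis.constr_apply_fintype]
  have comp_eq : σ ∘ₗ (LinearMap.toSpanSingleton ℂ V v).restrictScalars ℝ =
      (LinearMap.toSpanSingleton ℂ W w).restrictScalars ℝ ∘ₗ f :=
    Complex.basisOneI.ext fun i => by fin_cases i <;> simp [f_one, f_I, hα, hβ]
  exact ⟨f, f_one, f_I, LinearMap.congr_fun comp_eq⟩

theorem scalarBlock_canonicalDeformation {ι : Type*} (b : Basis ι ℂ V) (τ : V →ₗ[ℝ] V) (t : ℝ)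
    (i j : ι) :
    scalarBlock b (canonicalDeformation τ t) i j = canonicalDeformation (scalarBlock b τ i j) t :=
  (canonicalDeformation_comp_restrictScalars _ _ _ _).symm

theorem det_le_det_canonicalDeformation_of_triangular {ι : Type*} [Finite ι] [LinearOrder ι]
    (b : Basis ι ℂ V) {τ : V →ₗ[ℝ] V} (hdet : 0 < LinearMap.det τ)
    (hτ : ∀ i j, j < i → scalarBlock b τ i j = 0) {k₀ : ι}
    (hpos : ∀ k ≠ k₀, 0 < LinearMap.det (scalarBlock b τ k k)) {t : ℝ}
    (ht : t ∈ Set.Icc (-1) 1) :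
    LinearMap.det τ ≤ LinearMap.det (canonicalDeformation τ t) := by
  cases nonempty_fintype ι
  have det_τ := det_eq_prod_det_scalarBlock b τ hτ
  have det_H := det_eq_prod_det_scalarBlock b (canonicalDeformation τ t) fun i j hji => by
    rw [scalarBlock_canonicalDeformation, hτ i j hji, canonicalDeformation_zero]
  have pos_k₀ : 0 < LinearMap.det (scalarBlock b τ k₀ k₀) := by
    rw [det_τ, ← Finset.mul_prod_erase _ _ (Finset.mem_univ k₀)] at hdet
    exact pos_of_mul_pos_left hdet
      (Finset.prod_nonneg fun k hk => (hpos k (Finset.ne_of_mem_erase hk)).le)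
  rw [det_τ, det_H]
  refine Finset.prod_le_prod (fun k _ => ?_) fun k _ => ?_
  · obtain rfl | hk := eq_or_ne k k₀
    exacts [pos_k₀.le, (hpos k hk).le]
  · rw [scalarBlock_canonicalDeformation]
    exact det_complex_le_det_canonicalDeformation _ ht

theorem det_le_det_canonicalDeformation_of_invariant_lines {m : ℕ} (hV : finrank ℂ V = m + 1)
    {τ : V →ₗ[ℝ] V} (hdet : 0 < LinearMap.det τ) {v : Fin m → V} (hv : LinearIndependent ℂ v)
    {f : Fin m → ℂ →ₗ[ℝ] ℂ} (hf : ∀ j, 0 < LinearMap.det (f j))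
    (hτ : ∀ j (z : ℂ), τ (z • v j) = f j z • v j) {t : ℝ} (ht : t ∈ Set.Icc (-1) 1) :
    LinearMap.det τ ≤ LinearMap.det (canonicalDeformation τ t) := by
  obtain ⟨b, hb⟩ := exists_basis_castSucc_eq hV hv
  have block_apply (i) (j : Fin m) (z : ℂ) :
      scalarBlock b τ i j.castSucc z = f j z * Finsupp.single j.castSucc 1 i := by
    rw [scalarBlock_apply, hb, hτ, ← hb, map_smul, b.repr_self, Finsupp.smul_apply, smul_eq_mul]
  refine det_le_det_canonicalDeformation_of_triangular b hdet (fun i j hji => ?_)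
    (k₀ := Fin.last m) (fun k hk => ?_) ht
  · obtain ⟨j, rfl⟩ := Fin.exists_castSucc_eq.2 (Fin.ne_last_of_lt hji)
    ext z
    simp [block_apply, hji.ne]
  · obtain ⟨j, rfl⟩ := Fin.exists_castSucc_eq.2 hk
    have diagonal_eq : scalarBlock b τ j.castSucc j.castSucc = f j :=
      LinearMap.ext fun z => by simp [block_apply]
    exact diagonal_eq ▸ hf j

theorem canonical_deformation_orientation_preserving_general {m : ℕ} (hV : finrank ℂ V = m + 1)
    {σ : V →ₗ[ℝ] V} (hdet : 0 < LinearMap.det σ) {v : Fin m → V} (hv : LinearIndependent ℂ v)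
    (hlines : ∀ j, ∃ (w : V) (α β : ℂ), σ (v j) = α • w ∧ σ (Complex.I • v j) = β • w ∧
      0 < ((starRingEnd ℂ) α * β).im)
    {t : ℝ} (ht : t ∈ Set.Icc (-1) 1) :
    LinearMap.det σ ≤ LinearMap.det (canonicalDeformation σ t) := by
  have : FiniteDimensional ℂ V := .of_finrank_eq_succ hV
  have : FiniteDimensional ℝ V := Module.Finite.trans ℂ V
  choose w α β hα hβ hαβ using hlines
  choose f f_one f_I hf using fun j => exists_apply_smul_eq_smul (hα j) (hβ j)
  have det_f_pos (j) : 0 < LinearMap.det (f j) := by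
    rw [det_complex_eq_im_conj_mul, f_one, f_I]
    exact hαβ j
  have hw : LinearIndependent ℂ w :=
    linearIndependent_of_injective_of_smul_mem_span
      (LinearMap.equivOfDetNeZero σ hdet.ne').injective hv
      fun j z => Submodule.mem_span_singleton.2 ⟨f j z, (hf j z).symm⟩
  obtain ⟨P, hP⟩ := exists_linearEquiv_apply_eq_of_linearIndependent hw hv
  let Pℝ := (P : V →ₗ[ℂ] V).restrictScalars ℝ
  have det_P_pos : 0 < LinearMap.det Pℝ := det_restrictScalars_pos P
  have deformation_comp : canonicalDeformation (Pℝ ∘ₗ σ) t = Pℝ ∘ₗ canonicalDeformation σ t :=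
    canonicalDeformation_comp_restrictScalars (P : V →ₗ[ℂ] V) σ LinearMap.id t
  have det_comp_pos : 0 < LinearMap.det (Pℝ ∘ₗ σ) := by
    rw [LinearMap.det_comp]
    positivity
  have det_comp_le := det_le_det_canonicalDeformation_of_invariant_lines hV det_comp_pos hv
    det_f_pos (fun j z => by simp [Pℝ, hf, hP]) ht
  rw [deformation_comp, LinearMap.det_comp, LinearMap.det_comp] at det_comp_le
  exact le_of_mul_le_mul_left det_comp_le det_P_pos

end InvariantLines

/-- Lemma `deformation`: let σ : ℂⁿ → ℂⁿ be a real-linear map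
with positive determinant (as an ℝ-linear endomorphism of ℂⁿ). If there are
n−1 complex-linearly independent vectors v₁,…,v_{n−1} such that σ maps each
complex line ℂ·v_j onto a complex line ℂ·w_j preserving the natural
orientations of complex lines, then for each t ∈ [0,1] the map
H_σ^t = ∂σ + t·∂̄σ has positive real determinant; in particular it is a
real-linear isomorphism. -/
theorem canonical_deformation_orientation_preserving
    (n : ℕ) (hn : 1 ≤ n)
    (σ : (Fin n → ℂ) →ₗ[ℝ] (Fin n → ℂ))
    (hdet : 0 < LinearMap.det σ)
    (v : Fin (n - 1) → (Fin n → ℂ))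
    (hv : LinearIndependent ℂ v)
    (hlines : ∀ j : Fin (n - 1), ∃ (w : Fin n → ℂ) (α β : ℂ),
      w ≠ 0 ∧ σ (v j) = α • w ∧ σ (Complex.I • v j) = β • w ∧
      0 < ((starRingEnd ℂ) α * β).im) :
    ∀ t ∈ Set.Icc (0 : ℝ) 1,
      ∃ H : (Fin n → ℂ) →ₗ[ℝ] (Fin n → ℂ),
        (∀ u : Fin n → ℂ,
          H u = (1 / 2 : ℂ) • (σ u - Complex.I • σ (Complex.I • u))
            + t • ((1 / 2 : ℂ) • (σ u + Complex.I • σ (Complex.I • u)))) ∧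
        0 < LinearMap.det H ∧ Function.Bijective H := by
  intro t ht
  obtain ⟨m, rfl⟩ := Nat.exists_eq_add_of_le' hn
  have hpos : 0 < LinearMap.det (canonicalDeformation σ t) :=
    hdet.trans_le <| canonical_deformation_orientation_preserving_general (by simp) hdet hv
      (fun j => let ⟨w, α, β, _, hw⟩ := hlines j; ⟨w, α, β, hw⟩) ⟨by linarith [ht.1], ht.2⟩
  exact ⟨canonicalDeformation σ t, canonicalDeformation_apply σ t, hpos,
    (LinearMap.equivOfDetNeZero _ hpos.ne').bijective⟩
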